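/- Let n ≥ 6 be an even integer and let σ = (a b; 2^{n−1} d) ∈ SL₂(ℤ) (so a·d − 2^{n−1}·b = 1 with a, d odd). Then x_n vanishes to order 2^{n−4} and y_n vanishes to order 1 at the cusp a/2^{n−1}: there exist nonzero complex numbers ε₁ and ε₂ such that x_n(στ)·exp(−2πi·2^{n−4}·τ) → ε₁ and y_n(στ)·exp(−2πi·τ) → ε₂ as Im τ → ∞, where στ = (aτ+b)/(2^{n−1}τ+d). -/

import Mathlib

open Complex Filter Topology

/-- Jacobi theta function θ₂(τ) = ∑_{n∈ℤ} exp(πiτ(n+1/2)²). -/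
noncomputable def θ₂ (τ : ℂ) : ℂ :=
  ∑' n : ℤ, Complex.exp (Real.pi * Complex.I * τ * ((n : ℂ) + 1/2)^2)

/-- Jacobi theta function θ₃(τ) = ∑_{n∈ℤ} exp(πiτn²). -/
noncomputable def θ₃ (τ : ℂ) : ℂ :=
  ∑' n : ℤ, Complex.exp (Real.pi * Complex.I * τ * (n : ℂ)^2)

/-- x_n(τ) = 2θ₃(2^{n-1}τ)/θ₂(2^{n-1}τ). -/
noncomputable def xfun (n : ℕ) (τ : ℂ) : ℂ :=
  2 * θ₃ (2^(n-1) * τ) / θ₂ (2^(n-1) * τ)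

/-- y_n(τ) = θ₂(8τ)/θ₂(2^{n-1}τ). -/
noncomputable def yfun (n : ℕ) (τ : ℂ) : ℂ :=
  θ₂ (8 * τ) / θ₂ (2^(n-1) * τ)

/-!
With `w = 2^(n-1) τ + d` one has
`2^(n-1) στ = a - 1/w`, so that, `a` being odd, `θ₃(2^(n-1) στ)` and `θ₂(2^(n-1) στ)` are
`√(-iw)` times `θ₂(w)` and a constant multiple of `θ₄(w)`.
On the other hand `8στ` is the image of `8τ` under `(a 8b; 2^(n-4) d) ∈ Γ₀(2)`. The eighth powers of
`θ₂, θ₃, θ₄` are permuted by `SL₂(ℤ)` in weight `4` the way it permutes the nonzero vectors of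
`𝔽₂²`, and `Γ₀(2)` fixes the vector of `θ₂`. Hence `θ₂(8στ)` and `√(-iw) θ₂(8τ)` have the same
eighth power, and being holomorphic they differ by a constant. The square roots cancel in both
quotients, and it remains to use `θ₂(τ) ~ 2 exp(πiτ/4)` and `θ₄(τ) → 1` as `Im τ → ∞`.
-/

open scoped Real UpperHalfPlane MatrixGroups ModularForm Matrix

theorem exists_forall_eq_const_mul_of_pow_eq_pow {𝕜 : Type*} [NontriviallyNormedField 𝕜]
    {f g : 𝕜 → 𝕜} {U : Set 𝕜} {k : ℕ} (hf : AnalyticOnNhd 𝕜 f U) (hg : AnalyticOnNhd 𝕜 g U)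
    (hUo : IsOpen U) (hU : IsConnected U) (hk : 0 < k) (hfg : ∀ z ∈ U, f z ^ k = g z ^ k) :
    ∃ ζ : 𝕜, ζ ^ k = 1 ∧ ∀ z ∈ U, f z = ζ * g z := by
  obtain ⟨z₀, hz₀⟩ := hU.nonempty
  have exists_root : ∀ z ∈ U, ∃ ζ ∈ Polynomial.nthRootsFinset k (1 : 𝕜), f z = ζ * g z := by
    intro z hz
    simp only [Polynomial.mem_nthRootsFinset hk]
    rcases eq_or_ne (g z) 0 with hgz | hgz
    · have hfz : f z = 0 := by simpa [hgz, hk.ne'] using hfg z hz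
      exact ⟨1, one_pow k, by simp [hfz, hgz]⟩
    · exact ⟨f z / g z, by rw [div_pow, hfg z hz, div_self (pow_ne_zero k hgz)],
        (div_mul_cancel₀ _ hgz).symm⟩
  have hfreq : ∃ᶠ z in 𝓝[≠] z₀, ∃ ζ ∈ Polynomial.nthRootsFinset k (1 : 𝕜), f z = ζ * g z :=
    (eventually_nhdsWithin_of_eventually_nhds
      ((hUo.eventually_mem hz₀).mono exists_root)).frequently
  obtain ⟨ζ, hζ, hfreqζ⟩ := (frequently_exists_finset _).mp hfreq
  exact ⟨ζ, (Polynomial.mem_nthRootsFinset hk 1).mp hζ,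
    hf.eqOn_of_preconnected_of_frequently_eq (analyticOnNhd_const.mul hg) hU.isPreconnected hz₀
      hfreqζ⟩

/-- The Jacobi theta function `θ₄(τ) = ∑ (-1)ⁿ exp(πiτn²)`, encoded as a value of Mathlib's
two-variable theta function. It describes `θ₂` and `θ₃` near the cusps away from `∞`. -/
noncomputable def θ₄ (τ : ℂ) : ℂ :=
  jacobiTheta₂ (1 / 2) τ

lemma θ₃_eq_jacobiTheta₂ (τ : ℂ) : θ₃ τ = jacobiTheta₂ 0 τ := by
  unfold θ₃ jacobiTheta₂ jacobiTheta₂_term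
  congr! 3
  ring

lemma θ₂_eq_exp_mul_jacobiTheta₂ (τ : ℂ) :
    θ₂ τ = cexp (π * I * τ / 4) * jacobiTheta₂ (τ / 2) τ := by
  unfold θ₂ jacobiTheta₂ jacobiTheta₂_term
  rw [← tsum_mul_left]
  congr! 2 with n
  rw [← Complex.exp_add]
  ring_nf

lemma θ₂_add_intCast (τ : ℂ) (a : ℤ) : θ₂ (τ + a) = cexp (π * I * a / 4) * θ₂ τ := by
  unfold θ₂
  rw [← tsum_mul_left]
  congr! 2 with n
  obtain ⟨r, hr⟩ := Int.even_mul_succ_self n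
  have hrC : (n : ℂ) * (n + 1) = r + r := mod_cast hr
  rw [← Complex.exp_add, exp_eq_exp_iff_exists_int]
  exact ⟨a * r, by push_cast; linear_combination π * I * a * hrC⟩

lemma jacobiTheta₂_add_odd (z τ : ℂ) {a : ℤ} (ha : Odd a) :
    jacobiTheta₂ z (τ + a) = jacobiTheta₂ (z + 1 / 2) τ := by
  unfold jacobiTheta₂ jacobiTheta₂_term
  congr! 2 with n
  obtain ⟨k, rfl⟩ := ha
  obtain ⟨r, hr⟩ := Int.even_mul_pred_self n
  have hrC : (n : ℂ) * (n - 1) = r + r := mod_cast hr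
  rw [exp_eq_exp_iff_exists_int]
  exact ⟨k * n ^ 2 + r, by push_cast; linear_combination π * I * hrC⟩

lemma θ₃_add_odd (τ : ℂ) {a : ℤ} (ha : Odd a) : θ₃ (τ + a) = θ₄ τ := by
  rw [θ₃_eq_jacobiTheta₂, jacobiTheta₂_add_odd 0 τ ha, zero_add, θ₄]

lemma θ₄_add_odd (τ : ℂ) {a : ℤ} (ha : Odd a) : θ₄ (τ + a) = θ₃ τ := by
  rw [θ₄, jacobiTheta₂_add_odd _ τ ha, add_halves, ← zero_add 1, jacobiTheta₂_add_left,
    θ₃_eq_jacobiTheta₂]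

lemma neg_I_mul_cpow_half_ne_zero {τ : ℂ} (hτ : τ ≠ 0) : (-I * τ) ^ (1 / 2 : ℂ) ≠ 0 := by
  simp [cpow_eq_zero_iff, hτ]

lemma neg_I_mul_cpow_half_pow_eight (τ : ℂ) : ((-I * τ) ^ (1 / 2 : ℂ)) ^ 8 = τ ^ 4 := by
  calc ((-I * τ) ^ (1 / 2 : ℂ)) ^ 8 = (((-I * τ) ^ ((2 : ℂ)⁻¹)) ^ 2) ^ 4 := by
        rw [← pow_mul, one_div]
    _ = (-I * τ) ^ 4 := by rw [cpow_ofNat_inv_pow]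
    _ = τ ^ 4 := by rw [mul_pow, Even.neg_pow (by decide), I_pow_four, one_mul]

lemma θ₂_neg_one_div {τ : ℂ} (hτ : τ ≠ 0) :
    θ₂ (-1 / τ) = (-I * τ) ^ (1 / 2 : ℂ) * θ₄ τ := by
  have hsqrt := neg_I_mul_cpow_half_ne_zero hτ
  rw [θ₂_eq_exp_mul_jacobiTheta₂, θ₄, jacobiTheta₂_functional_equation (1 / 2) τ,
    ← jacobiTheta₂_neg_left (1 / 2 / τ), show -(1 / 2 / τ) = -1 / τ / 2 by ring,
    show -π * I * (1 / 2) ^ 2 / τ = π * I * (-1 / τ) / 4 by ring]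
  field_simp [hsqrt]

lemma θ₄_neg_one_div {τ : ℂ} (hτ : τ ≠ 0) :
    θ₄ (-1 / τ) = (-I * τ) ^ (1 / 2 : ℂ) * θ₂ τ := by
  have hsqrt := neg_I_mul_cpow_half_ne_zero hτ
  have hexp : -π * I * (τ / 2) ^ 2 / τ = -(π * I * τ / 4) := by
    field_simp
    norm_num
  rw [θ₂_eq_exp_mul_jacobiTheta₂, θ₄, jacobiTheta₂_functional_equation (τ / 2) τ, hexp,
    Complex.exp_neg, div_div_cancel_left' hτ, ← one_div]
  field_simp [hsqrt]

lemma θ₃_neg_one_div {τ : ℂ} (hτ : τ ≠ 0) :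
    θ₃ (-1 / τ) = (-I * τ) ^ (1 / 2 : ℂ) * θ₃ τ := by
  have hsqrt := neg_I_mul_cpow_half_ne_zero hτ
  rw [θ₃_eq_jacobiTheta₂, θ₃_eq_jacobiTheta₂, jacobiTheta₂_functional_equation 0 τ]
  field_simp [hsqrt]
  simp

lemma differentiableAt_θ₂ {τ : ℂ} (hτ : 0 < τ.im) : DifferentiableAt ℂ θ₂ τ := by
  have hJ : DifferentiableAt ℂ (fun τ : ℂ ↦ jacobiTheta₂ (τ / 2) τ) τ :=
    (hasFDerivAt_jacobiTheta₂ (τ / 2) hτ).differentiableAt.comp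
      (f := fun τ : ℂ ↦ (τ / 2, τ)) τ (by fun_prop)
  rw [funext θ₂_eq_exp_mul_jacobiTheta₂]
  fun_prop

/-- The eighth powers of `θ₂, θ₃, θ₄` and of the vanishing odd theta constant. The index is the
characteristic of the theta constant shifted by `(1, 1)`: this makes the action of `SL₂(ℤ)` on
indices linear instead of affine. -/
noncomputable def thetaPowEight (v : Fin 2 → ZMod 2) (z : ℍ) : ℂ :=
  if v 0 = 0 then if v 1 = 0 then 0 else θ₂ z ^ 8
  else if v 1 = 0 then θ₄ z ^ 8 else θ₃ z ^ 8

lemma thetaPowEight_slash_S (v : Fin 2 → ZMod 2) :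
    thetaPowEight v ∣[(4 : ℤ)] ModularGroup.S = thetaPowEight ![v 1, v 0] := by
  ext z
  have hz : (z : ℂ) ≠ 0 := z.ne_zero
  have hsmul : ((ModularGroup.S • z : ℍ) : ℂ) = -1 / z := by
    rw [UpperHalfPlane.modular_S_smul, UpperHalfPlane.coe_mk, inv_neg, neg_div, one_div]
  have hdenom : UpperHalfPlane.denom ModularGroup.S z = z := by
    rw [ModularGroup.denom_apply]
    simp [ModularGroup.S]
  have hweight : (z : ℂ) ^ (-4 : ℤ) = ((z : ℂ) ^ 4)⁻¹ := by
    rw [zpow_neg]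
    norm_cast
  rw [ModularForm.SL_slash_apply, hdenom, hweight]
  simp only [thetaPowEight, hsmul, θ₂_neg_one_div hz, θ₃_neg_one_div hz, θ₄_neg_one_div hz,
    mul_pow, neg_I_mul_cpow_half_pow_eight, Matrix.cons_val_zero, Matrix.cons_val_one]
  by_cases h₀ : v 0 = 0 <;> by_cases h₁ : v 1 = 0 <;> simp [h₀, h₁] <;> field_simp

lemma thetaPowEight_slash_T (v : Fin 2 → ZMod 2) :
    thetaPowEight v ∣[(4 : ℤ)] ModularGroup.T = thetaPowEight ![v 0, v 0 + v 1] := by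
  ext z
  have hsmul : ((ModularGroup.T • z : ℍ) : ℂ) = z + (1 : ℤ) := by
    rw [UpperHalfPlane.modular_T_smul]
    simp [add_comm]
  have hdenom : UpperHalfPlane.denom ModularGroup.T z = 1 := by
    rw [ModularGroup.denom_apply]
    simp [ModularGroup.T]
  have hroot : cexp (π * I * (1 : ℤ) / 4) ^ 8 = 1 := by
    rw [← Complex.exp_nat_mul, ← Complex.exp_two_pi_mul_I]
    push_cast
    ring_nf
  rw [ModularForm.SL_slash_apply, hdenom, one_zpow, mul_one]
  simp only [thetaPowEight, hsmul, θ₂_add_intCast, θ₃_add_odd _ odd_one, θ₄_add_odd _ odd_one,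
    mul_pow, hroot, one_mul, Matrix.cons_val_zero, Matrix.cons_val_one]
  have zero_or_one : ∀ p : ZMod 2, p = 0 ∨ p = 1 := by decide
  have one_add_one : (1 + 1 : ZMod 2) = 0 := by decide
  rcases zero_or_one (v 0) with h₀ | h₀ <;> rcases zero_or_one (v 1) with h₁ | h₁ <;>
    simp [h₀, h₁, one_add_one]

theorem thetaPowEight_slash (γ : SL(2, ℤ)) (v : Fin 2 → ZMod 2) :
    thetaPowEight v ∣[(4 : ℤ)] γ =
      thetaPowEight (v ᵥ* (Int.castRingHom (ZMod 2)).mapMatrix γ.1) := by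
  have hγ : γ ∈ Subgroup.closure {ModularGroup.S, ModularGroup.T} := by
    simp [SpecialLinearGroup.SL2Z_generators]
  induction hγ using Subgroup.closure_induction generalizing v with
  | mem x hx =>
    rcases hx with rfl | rfl
    · rw [thetaPowEight_slash_S]
      congr 1
      ext i
      fin_cases i <;> simp [Matrix.vecMul, dotProduct, ModularGroup.S]
    · rw [thetaPowEight_slash_T]
      congr 1
      ext i
      fin_cases i <;> simp [Matrix.vecMul, dotProduct, ModularGroup.T]
  | one => simp [SlashAction.slash_one]
  | mul x y _ _ hx hy =>
    rw [SlashAction.slash_mul, hx, hy, Matrix.vecMul_vecMul, ← map_mul,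
      Matrix.SpecialLinearGroup.coe_mul]
  | inv x _ hx =>
    set ρ := (Int.castRingHom (ZMod 2)).mapMatrix (m := Fin 2)
    have hv : v ᵥ* ρ x⁻¹.1 ᵥ* ρ x.1 = v := by
      rw [Matrix.vecMul_vecMul, ← map_mul, ← Matrix.SpecialLinearGroup.coe_mul, inv_mul_cancel,
        Matrix.SpecialLinearGroup.coe_one, map_one, Matrix.vecMul_one]
    calc thetaPowEight v ∣[(4 : ℤ)] x⁻¹
        = (thetaPowEight (v ᵥ* ρ x⁻¹.1) ∣[(4 : ℤ)] x) ∣[(4 : ℤ)] x⁻¹ := by rw [hx, hv]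
      _ = thetaPowEight (v ᵥ* ρ x⁻¹.1) := by
        rw [← SlashAction.slash_mul, mul_inv_cancel, SlashAction.slash_one]

theorem θ₂_smul_pow_eight {γ : SL(2, ℤ)} (hγ : γ ∈ CongruenceSubgroup.Gamma0 2) (z : ℍ) :
    θ₂ (γ • z : ℍ) ^ 8 = (γ 1 0 * z + γ 1 1) ^ 4 * θ₂ z ^ 8 := by
  have hc : ((γ 1 0 : ℤ) : ZMod 2) = 0 := CongruenceSubgroup.Gamma0_mem.mp hγ
  have hd : ((γ 1 1 : ℤ) : ZMod 2) = 1 := by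
    have hdet := congrArg (Int.cast : ℤ → ZMod 2) γ.det_coe
    rw [Matrix.det_fin_two] at hdet
    have eq_one_of_mul_eq_one : ∀ p q : ZMod 2, p * q = 1 → q = 1 := by decide
    exact eq_one_of_mul_eq_one (γ 0 0 : ℤ) _ (by simpa [hc] using hdet)
  have hfix : ![0, 1] ᵥ* (Int.castRingHom (ZMod 2)).mapMatrix γ.1 = ![0, 1] := by
    ext i
    fin_cases i <;> simp [Matrix.vecMul, dotProduct, hc, hd]
  have hslash := congrFun (thetaPowEight_slash γ ![0, 1]) z
  rw [hfix, ModularForm.slash_action_eq'_iff] at hslash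
  simpa [thetaPowEight] using! hslash

theorem exists_θ₂_moebius_eq_const_mul {a b c d : ℤ} (hdet : a * d - b * c = 1) (hc : Even c)
    (hc₀ : 0 < c) :
    ∃ κ : ℂ, κ ^ 8 = 1 ∧ ∀ z : ℂ, 0 < z.im →
      θ₂ ((a * z + b) / (c * z + d)) = κ * ((-I * (c * z + d)) ^ (1 / 2 : ℂ) * θ₂ z) := by
  let γ : SL(2, ℤ) := ⟨!![a, b; c, d], by rw [Matrix.det_fin_two_of, hdet]⟩
  have hγ : γ ∈ CongruenceSubgroup.Gamma0 2 :=
    CongruenceSubgroup.Gamma0_mem.mpr (ZMod.intCast_eq_zero_iff_even.mpr hc)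
  have hsmul (z : ℍ) : ((γ • z : ℍ) : ℂ) = (a * z + b) / (c * z + d) := by
    rw [UpperHalfPlane.coe_specialLinearGroup_apply]
    simp [γ]
  have hpow : ∀ z ∈ UpperHalfPlane.upperHalfPlaneSet, θ₂ ((a * z + b) / (c * z + d)) ^ 8 =
      ((-I * (c * z + d)) ^ (1 / 2 : ℂ) * θ₂ z) ^ 8 := by
    intro z hz
    rw [mul_pow, neg_I_mul_cpow_half_pow_eight]
    simpa [hsmul, γ] using θ₂_smul_pow_eight hγ ⟨z, hz⟩
  have hre (z : ℂ) (hz : 0 < z.im) : 0 < (-I * (c * z + d)).re := by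
    simp [hz, hc₀]
  have hf : DifferentiableOn ℂ (fun z : ℂ ↦ θ₂ ((a * z + b) / (c * z + d)))
      UpperHalfPlane.upperHalfPlaneSet := by
    intro z hz
    have hdenom : (c : ℂ) * z + d ≠ 0 := fun h ↦ by simpa [h] using hre z hz
    have him : 0 < ((a * z + b) / (c * z + d)).im := hsmul ⟨z, hz⟩ ▸ (γ • (⟨z, hz⟩ : ℍ)).im_pos
    exact (DifferentiableAt.comp (f := fun z : ℂ ↦ (a * z + b) / (c * z + d)) z
      (differentiableAt_θ₂ him) (by fun_prop (disch := exact hdenom))).differentiableWithinAt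
  have hg : DifferentiableOn ℂ (fun z : ℂ ↦ (-I * (c * z + d)) ^ (1 / 2 : ℂ) * θ₂ z)
      UpperHalfPlane.upperHalfPlaneSet := by
    intro z hz
    have hsqrt : DifferentiableAt ℂ (fun z : ℂ ↦ (-I * (c * z + d)) ^ (1 / 2 : ℂ)) z :=
      DifferentiableAt.cpow_const (by fun_prop) (Or.inl (hre z hz))
    exact (hsqrt.mul (differentiableAt_θ₂ hz)).differentiableWithinAt
  have hopen := UpperHalfPlane.isOpen_upperHalfPlaneSet
  exact exists_forall_eq_const_mul_of_pow_eq_pow (hf.analyticOnNhd hopen) (hg.analyticOnNhd hopen)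
    hopen ⟨⟨I, show 0 < I.im by simp⟩, (convex_halfSpace_im_gt 0).isPreconnected⟩ (by norm_num) hpow

lemma mul_moebius_eq_neg_one_div_add {K : Type*} [Field K] {a b c d τ : K}
    (hdet : a * d - c * b = 1) (hτ : c * τ + d ≠ 0) :
    c * ((a * τ + b) / (c * τ + d)) = -1 / (c * τ + d) + a := by
  field_simp
  linear_combination -hdet

lemma θ₂_mul_moebius {a : ℤ} {b c d τ : ℂ} (hdet : a * d - c * b = 1) (hτ : c * τ + d ≠ 0) :
    θ₂ (c * ((a * τ + b) / (c * τ + d))) =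
      cexp (π * I * a / 4) * ((-I * (c * τ + d)) ^ (1 / 2 : ℂ) * θ₄ (c * τ + d)) := by
  rw [mul_moebius_eq_neg_one_div_add hdet hτ, θ₂_add_intCast, θ₂_neg_one_div hτ]

lemma θ₃_mul_moebius {a : ℤ} {b c d τ : ℂ} (ha : Odd a) (hdet : a * d - c * b = 1)
    (hτ : c * τ + d ≠ 0) :
    θ₃ (c * ((a * τ + b) / (c * τ + d))) =
      (-I * (c * τ + d)) ^ (1 / 2 : ℂ) * θ₂ (c * τ + d) := by
  rw [mul_moebius_eq_neg_one_div_add hdet hτ, θ₃_add_odd _ ha, θ₄_neg_one_div hτ]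

lemma xfun_moebius {n : ℕ} {a : ℤ} {b d τ : ℂ} (ha : Odd a) (hdet : a * d - 2 ^ (n - 1) * b = 1)
    (hτ : 2 ^ (n - 1) * τ + d ≠ 0) :
    xfun n ((a * τ + b) / (2 ^ (n - 1) * τ + d)) =
      2 / cexp (π * I * a / 4) * (θ₂ (2 ^ (n - 1) * τ + d) / θ₄ (2 ^ (n - 1) * τ + d)) := by
  have hsqrt := neg_I_mul_cpow_half_ne_zero hτ
  rw [xfun, θ₂_mul_moebius hdet hτ, θ₃_mul_moebius ha hdet hτ]
  field_simp [hsqrt]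

lemma affine_ne_zero_of_im_pos {r s : ℝ} (hr : 0 < r) {τ : ℂ} (hτ : 0 < τ.im) :
    (r : ℂ) * τ + s ≠ 0 := fun h ↦ by
  simpa [hr.ne', hτ.ne'] using congrArg im h

theorem exists_yfun_moebius_eq_const_mul {n : ℕ} (hn : 5 ≤ n) {a b d : ℤ}
    (hdet : a * d - 2 ^ (n - 1) * b = 1) :
    ∃ κ : ℂ, κ ≠ 0 ∧ ∀ τ : ℂ, 0 < τ.im →
      yfun n ((a * τ + b) / (2 ^ (n - 1) * τ + d)) =
        κ * (θ₂ (8 * τ) / θ₄ (2 ^ (n - 1) * τ + d)) := by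
  obtain ⟨m, rfl⟩ : ∃ m, n = m + 4 := ⟨n - 4, by lia⟩
  rw [show m + 4 - 1 = m + 3 by lia] at *
  have hdet' : a * d - 8 * b * 2 ^ m = 1 := by linear_combination hdet
  have hdetC : (a : ℂ) * d - 2 ^ (m + 3) * b = 1 := mod_cast hdet
  obtain ⟨κ, hκ, hθ₂⟩ := exists_θ₂_moebius_eq_const_mul hdet'
    (even_two.pow_of_ne_zero (by lia)) (by positivity)
  have hκ₀ : κ ≠ 0 := by
    rintro rfl
    simp at hκ
  refine ⟨κ / cexp (π * I * a / 4), by simp [hκ₀], fun τ hτ ↦ ?_⟩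
  have hw : (2 : ℂ) ^ (m + 3) * τ + d ≠ 0 := by
    simpa using affine_ne_zero_of_im_pos (r := 2 ^ (m + 3)) (s := d) (by positivity) hτ
  have hsqrt := neg_I_mul_cpow_half_ne_zero hw
  have hdenom : ((2 ^ m : ℤ) : ℂ) * (8 * τ) + d = 2 ^ (m + 3) * τ + d := by
    push_cast
    ring
  have hmoebius : 8 * ((a * τ + b) / (2 ^ (m + 3) * τ + d)) =
      (a * (8 * τ) + (8 * b : ℤ)) / ((2 ^ m : ℤ) * (8 * τ) + d) := by
    rw [hdenom]
    push_cast
    ring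
  rw [yfun, show m + 4 - 1 = m + 3 by lia, θ₂_mul_moebius hdetC hw, hmoebius,
    hθ₂ (8 * τ) (by simpa using hτ), hdenom]
  field_simp [hsqrt]

lemma tendsto_affine_comap_im_atTop {r : ℝ} (hr : 0 < r) (s : ℝ) :
    Tendsto (fun τ : ℂ ↦ r * τ + s) (comap im atTop) (comap im atTop) := by
  rw [tendsto_comap_iff]
  exact (tendsto_comap.const_mul_atTop hr).congr fun τ ↦ by simp

lemma tendsto_exp_mul_im_comap_im_atTop {r : ℝ} (hr : r < 0) :
    Tendsto (fun τ : ℂ ↦ Real.exp (r * τ.im)) (comap im atTop) (𝓝 0) :=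
  Real.tendsto_exp_atBot.comp (tendsto_comap.const_mul_atTop_of_neg hr)

lemma tendsto_jacobiTheta_comap_im_atTop : Tendsto jacobiTheta (comap im atTop) (𝓝 1) := by
  have hsub := isBigO_at_im_infty_jacobiTheta_sub_one.trans_tendsto
    (tendsto_exp_mul_im_comap_im_atTop (neg_neg_of_pos Real.pi_pos))
  simpa using hsub.add_const 1

lemma tendsto_θ₄_comap_im_atTop : Tendsto θ₄ (comap im atTop) (𝓝 1) := by
  refine (tendsto_jacobiTheta_comap_im_atTop.comp
    (tendsto_affine_comap_im_atTop one_pos 1)).congr fun τ ↦ ?_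
  rw [Function.comp_apply, jacobiTheta_eq_jacobiTheta₂, ← θ₃_eq_jacobiTheta₂,
    ← θ₃_add_odd τ odd_one]
  simp

theorem tendsto_tsum_exp_comap_im_atTop {ι : Type*} {q : ι → ℝ} {s : Finset ι}
    (hq : ∀ i, 0 ≤ q i) (hqs : ∀ i, q i = 0 ↔ i ∈ s)
    (hsum : Summable fun i ↦ Real.exp (-π * q i)) :
    Tendsto (fun τ : ℂ ↦ ∑' i, cexp (π * I * τ * q i)) (comap im atTop) (𝓝 s.card) := by
  classical
  have hnorm (τ : ℂ) (i : ι) : ‖cexp (π * I * τ * q i)‖ = Real.exp (-π * q i * τ.im) := by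
    rw [Complex.norm_exp]
    simp [mul_right_comm]
  have hcard : (s.card : ℂ) = ∑' i, if i ∈ s then 1 else 0 := by
    rw [tsum_eq_sum (s := s) (by simp +contextual)]
    simp
  rw [hcard]
  refine tendsto_tsum_of_dominated_convergence hsum (fun i ↦ ?_) ?_
  · split_ifs with hi
    · simpa [(hqs i).mpr hi] using tendsto_const_nhds
    · have hqi : 0 < q i := (hq i).lt_of_ne' (mt (hqs i).mp hi)
      rw [tendsto_zero_iff_norm_tendsto_zero]
      simp only [hnorm]
      exact tendsto_exp_mul_im_comap_im_atTop (by nlinarith [Real.pi_pos])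
  · filter_upwards [tendsto_comap.eventually (eventually_ge_atTop 1)] with τ hτ i
    rw [hnorm, Real.exp_le_exp]
    nlinarith [mul_nonneg Real.pi_pos.le (hq i)]

lemma tendsto_jacobiTheta₂_half_comap_im_atTop :
    Tendsto (fun τ : ℂ ↦ jacobiTheta₂ (τ / 2) τ) (comap im atTop) (𝓝 2) := by
  have hterm (n : ℤ) (τ : ℂ) :
      jacobiTheta₂_term n (τ / 2) τ = cexp (π * I * τ * (n * (n + 1) : ℝ)) := by
    rw [jacobiTheta₂_term]
    push_cast
    ring_nf
  have hnonneg (n : ℤ) : (0 : ℝ) ≤ n * (n + 1) := by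
    have : 0 ≤ n * (n + 1) := by rcases le_or_gt 0 n with h | h <;> nlinarith
    exact_mod_cast this
  have hzero (n : ℤ) : (n * (n + 1) : ℝ) = 0 ↔ n ∈ ({0, -1} : Finset ℤ) := by
    rw [mul_eq_zero, add_eq_zero_iff_eq_neg]
    norm_cast
    simp
  have hsum : Summable fun n : ℤ ↦ Real.exp (-π * (n * (n + 1) : ℝ)) := by
    have := ((summable_jacobiTheta₂_term_iff (I / 2) I).mpr (by simp)).norm
    refine this.congr fun n ↦ ?_
    rw [hterm, Complex.norm_exp]
    simp
  simpa [jacobiTheta₂, hterm] using tendsto_tsum_exp_comap_im_atTop hnonneg hzero hsum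

lemma tendsto_θ₂_affine_mul_exp {r : ℝ} (hr : 0 < r) (s : ℝ) :
    Tendsto (fun τ : ℂ ↦ θ₂ (r * τ + s) * cexp (-(π * I * r * τ / 4))) (comap im atTop)
      (𝓝 (cexp (π * I * s / 4) * 2)) := by
  refine ((tendsto_jacobiTheta₂_half_comap_im_atTop.comp
    (tendsto_affine_comap_im_atTop hr s)).const_mul _).congr fun τ ↦ ?_
  have hexp : cexp (π * I * s / 4) =
      cexp (π * I * (r * τ + s) / 4) * cexp (-(π * I * r * τ / 4)) := by
    rw [← Complex.exp_add]
    ring_nf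
  rw [θ₂_eq_exp_mul_jacobiTheta₂, hexp, Function.comp_apply]
  ring

theorem tendsto_θ₂_div_θ₄_affine_mul_exp {r r' : ℝ} (hr : 0 < r) (hr' : 0 < r') (s s' : ℝ) :
    Tendsto (fun τ : ℂ ↦ θ₂ (r * τ + s) / θ₄ (r' * τ + s') * cexp (-(π * I * r * τ / 4)))
      (comap im atTop) (𝓝 (cexp (π * I * s / 4) * 2)) := by
  have hθ₄ := tendsto_θ₄_comap_im_atTop.comp (tendsto_affine_comap_im_atTop hr' s')
  simpa [div_mul_eq_mul_div] using! (tendsto_θ₂_affine_mul_exp hr s).div hθ₄ one_ne_zero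

theorem exists_tendsto_xfun_moebius {n : ℕ} (hn : 4 ≤ n) {a b d : ℤ}
    (hdet : a * d - 2 ^ (n - 1) * b = 1) :
    ∃ ε : ℂ, ε ≠ 0 ∧ Tendsto (fun τ : ℂ ↦ xfun n ((a * τ + b) / (2 ^ (n - 1) * τ + d)) *
      cexp (-(2 * π * I * 2 ^ (n - 4) * τ))) (comap im atTop) (𝓝 ε) := by
  have ha : Odd a := by
    have heven : Even ((2 : ℤ) ^ (n - 1) * b) :=
      (even_two.pow_of_ne_zero (by lia)).mul_right b
    have hodd : Odd (a * d) := by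
      rw [sub_eq_iff_eq_add.mp hdet]
      exact heven.one_add
    exact (Int.odd_mul.mp hodd).1
  have hdetC : (a : ℂ) * d - 2 ^ (n - 1) * b = 1 := mod_cast hdet
  have hpow : (2 : ℂ) ^ (n - 1) = 8 * 2 ^ (n - 4) := by
    rw [show n - 1 = n - 4 + 3 by lia, pow_add]
    norm_num [mul_comm]
  have hpos : (0 : ℝ) < 2 ^ (n - 1) := by positivity
  refine ⟨2 / cexp (π * I * a / 4) * (cexp (π * I * d / 4) * 2), by simp, ?_⟩
  have hlim := (tendsto_θ₂_div_θ₄_affine_mul_exp hpos hpos d d).const_mul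
    (2 / cexp (π * I * a / 4))
  push_cast at hlim
  refine hlim.congr' ?_
  filter_upwards [tendsto_comap.eventually (eventually_gt_atTop 0)] with τ hτ
  have hw : (2 : ℂ) ^ (n - 1) * τ + d ≠ 0 := by
    simpa using affine_ne_zero_of_im_pos (s := d) hpos hτ
  rw [xfun_moebius ha hdetC hw, ← mul_assoc,
    show π * I * 2 ^ (n - 1) * τ / 4 = 2 * π * I * 2 ^ (n - 4) * τ by rw [hpow]; ring]

theorem exists_tendsto_yfun_moebius {n : ℕ} (hn : 5 ≤ n) {a b d : ℤ}
    (hdet : a * d - 2 ^ (n - 1) * b = 1) :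
    ∃ ε : ℂ, ε ≠ 0 ∧ Tendsto (fun τ : ℂ ↦ yfun n ((a * τ + b) / (2 ^ (n - 1) * τ + d)) *
      cexp (-(2 * π * I * τ))) (comap im atTop) (𝓝 ε) := by
  obtain ⟨κ, hκ, hyfun⟩ := exists_yfun_moebius_eq_const_mul hn hdet
  have hlim := (tendsto_θ₂_div_θ₄_affine_mul_exp (r := 8) (r' := 2 ^ (n - 1)) (by norm_num)
    (by positivity) 0 d).const_mul κ
  push_cast at hlim
  refine ⟨_, by simp [hκ], hlim.congr' ?_⟩
  filter_upwards [tendsto_comap.eventually (eventually_gt_atTop 0)] with τ hτ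
  rw [hyfun τ hτ, ← mul_assoc, add_zero, show π * I * 8 * τ / 4 = 2 * π * I * τ by ring]

theorem zeros_at_cusp_2_pow_n_sub_one_general (n : ℕ) (hn : 5 ≤ n)
    (a b d : ℤ) (hdet : a * d - 2 ^ (n - 1) * b = 1) :
    ∃ ε₁ ε₂ : ℂ, ε₁ ≠ 0 ∧ ε₂ ≠ 0 ∧
      Tendsto (fun τ : ℂ =>
          xfun n (((a : ℂ) * τ + b) / ((2 ^ (n - 1) : ℂ) * τ + d)) *
            Complex.exp (-(2 * Real.pi * Complex.I * (2 ^ (n - 4) : ℂ) * τ)))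
        (comap Complex.im atTop) (𝓝 ε₁) ∧
      Tendsto (fun τ : ℂ =>
          yfun n (((a : ℂ) * τ + b) / ((2 ^ (n - 1) : ℂ) * τ + d)) *
            Complex.exp (-(2 * Real.pi * Complex.I * τ)))
        (comap Complex.im atTop) (𝓝 ε₂) := by
  obtain ⟨ε₁, hε₁, hx⟩ := exists_tendsto_xfun_moebius (by lia) hdet
  obtain ⟨ε₂, hε₂, hy⟩ := exists_tendsto_yfun_moebius hn hdet
  exact ⟨ε₁, ε₂, hε₁, hε₂, hx, hy⟩

theorem zeros_at_cusp_2_pow_n_sub_one (n : ℕ) (hn : 6 ≤ n) (hn2 : Even n)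
    (a b d : ℤ) (hdet : a * d - 2 ^ (n - 1) * b = 1) :
    ∃ ε₁ ε₂ : ℂ, ε₁ ≠ 0 ∧ ε₂ ≠ 0 ∧
      Tendsto (fun τ : ℂ =>
          xfun n (((a : ℂ) * τ + b) / ((2 ^ (n - 1) : ℂ) * τ + d)) *
            Complex.exp (-(2 * Real.pi * Complex.I * (2 ^ (n - 4) : ℂ) * τ)))
        (comap Complex.im atTop) (𝓝 ε₁) ∧
      Tendsto (fun τ : ℂ =>
          yfun n (((a : ℂ) * τ + b) / ((2 ^ (n - 1) : ℂ) * τ + d)) *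
            Complex.exp (-(2 * Real.pi * Complex.I * τ)))
        (comap Complex.im atTop) (𝓝 ε₂) :=
  zeros_at_cusp_2_pow_n_sub_one_general n (by lia) a b d hdet
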